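/- Let M = (S, A, P, R, H, μ) be a finite MDP satisfying the bounded total reward assumption, let π be a (possibly non-stationary) deterministic policy, and let 0 < ε ≤ 1/2. For each (s, a) ∈ S × A define m̄(s, a) = Q^π_{ε/(12|S||A|)}(s, a). Let M̂ = (S, A, P̂, R̂, H, μ̂) be another MDP. If for all (s, a, s′) ∈ S × A × S with m̄(s, a) ≥ 1 we have |P̂(s′|s,a) − P(s′|s,a)| ≤ (ε/(96|S|²|A|)) · max(√(ε·P(s′|s,a)/(72·m̄(s,a)·|S||A|)), ε/(72·m̄(s,a)·|S||A|)) and |E[R̂(s,a)] − E[R(s,a)]| ≤ (ε/(24|S||A|)) · max(√(E[(R(s,a))²]/m̄(s,a)), 1/m̄(s,a)), and for all s ∈ S we have |μ(s) − μ̂(s)| ≤ ε/(6|S|), then V^π_{M̂,H} ≥ V^π_{M,H} − ε. -/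

import Mathlib

open Finset MeasureTheory

/-- Extend a trajectory `(s_0, …, s_H)` to a function `ℕ → S` (constant after time `H`). -/
def extT {S : Type} (H : ℕ) (T : Fin (H + 1) → S) : ℕ → S :=
  fun n => T ⟨min n H, Nat.lt_succ_of_le (Nat.min_le_right n H)⟩

/-- Probability of the trajectory with state sequence `f` under the (possibly non-stationary)
deterministic policy `π`: `p(T, M, π) = μ(s_0) · ∏_{h<H} P(s_{h+1} ∣ s_h, π_h(s_h))`. -/
noncomputable def trajP {S A : Type} (μ : S → ℝ) (P : S → A → S → ℝ)
    (π : ℕ → S → A) (H : ℕ) (f : ℕ → S) : ℝ :=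
  μ (f 0) * ∏ h ∈ Finset.range H, P (f h) (π h (f h)) (f (h + 1))

/-- Number of times the state-action pair `z` is visited during the first `K` steps of the
trajectory with state sequence `f`, when actions are chosen by the policy `π`. -/
def nVisits {S A : Type} [DecidableEq S] [DecidableEq A] (π : ℕ → S → A) (K : ℕ)
    (z : S × A) (f : ℕ → S) : ℕ :=
  ∑ h ∈ Finset.range K, if (f h, π h (f h)) = z then 1 else 0

/-- The `d`-quantile `Q_d(X) = sup {x ∣ Pr[X ≥ x] ≥ d}` of the random variable `X` of the random
trajectory induced by executing the policy `π` in the `H`-horizon MDP `(μ, P)`. -/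
noncomputable def quantNS {S A : Type} [Fintype S] (μ : S → ℝ) (P : S → A → S → ℝ)
    (π : ℕ → S → A) (H : ℕ) (X : (ℕ → S) → ℝ) (d : ℝ) : ℝ :=
  sSup {x : ℝ | d ≤ ∑ T : Fin (H + 1) → S,
    if x ≤ X (extT H T) then trajP μ P π H (extT H T) else 0}

/-- Value of a (possibly non-stationary) deterministic policy `π` in the `H`-horizon MDP:
`V^π = Σ_{T compatible with π} p(T, M, π) · Σ_{h<H} E[R(s_h, a_h)]`. -/
noncomputable def valNS {S A : Type} [Fintype S] (μ : S → ℝ) (P : S → A → S → ℝ)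
    (Rmean : S → A → ℝ) (π : ℕ → S → A) (H : ℕ) : ℝ :=
  ∑ T : Fin (H + 1) → S,
    trajP μ P π H (extT H T) *
      ∑ h ∈ Finset.range H, Rmean (extT H T h) (π h (extT H T h))

lemma extT_snoc_of_le {S : Type} {k n : ℕ} (T : Fin (k + 1) → S) (s : S) (hn : n ≤ k) :
    extT (k + 1) (Fin.snoc (α := fun _ => S) T s) n = extT k T n := by
  have h : min n (k + 1) < k + 1 := by omega
  have e : min n (k + 1) = min n k := by omega
  simp [extT, Fin.snoc, e, hn]

lemma extT_snoc_last {S : Type} {k : ℕ} (T : Fin (k + 1) → S) (s : S) :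
    extT (k + 1) (Fin.snoc (α := fun _ => S) T s) (k + 1) = s := by
  simp [extT, Fin.snoc]

lemma sum_fin_snoc {S : Type} [Fintype S] (k : ℕ) (F : (Fin (k + 2) → S) → ℝ) :
    ∑ T, F T = ∑ T : Fin (k + 1) → S, ∑ s, F (Fin.snoc (α := fun _ => S) T s) := by
  rw [← (Fin.snocEquiv (fun _ : Fin (k + 2) => S)).sum_comp, Fintype.sum_prod_type_right]
  rfl

section Trajectories

variable {S A : Type}

lemma trajP_snoc (μ : S → ℝ) (P : S → A → S → ℝ) (π : ℕ → S → A) (k : ℕ)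
    (T : Fin (k + 1) → S) (s : S) :
    trajP μ P π (k + 1) (extT (k + 1) (Fin.snoc (α := fun _ => S) T s)) =
      trajP μ P π k (extT k T) * P (extT k T k) (π k (extT k T k)) s := by
  unfold trajP
  rw [prod_range_succ, extT_snoc_last, extT_snoc_of_le T s le_rfl,
    extT_snoc_of_le T s (Nat.zero_le k), mul_assoc]
  congr 2
  refine prod_congr rfl fun h hh => ?_
  have := mem_range.1 hh
  rw [extT_snoc_of_le T s (by omega), extT_snoc_of_le T s (by omega)]

lemma trajP_nonneg {μ : S → ℝ} {P : S → A → S → ℝ} (hμ : ∀ s, 0 ≤ μ s)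
    (hP : ∀ s a s', 0 ≤ P s a s') (π : ℕ → S → A) (H : ℕ) (f : ℕ → S) :
    0 ≤ trajP μ P π H f :=
  mul_nonneg (hμ _) (prod_nonneg fun _ _ => hP _ _ _)

lemma sum_trajP [Fintype S] (μ : S → ℝ) {P : S → A → S → ℝ} (hP : ∀ s a, ∑ s', P s a s' = 1)
    (π : ℕ → S → A) (k : ℕ) :
    ∑ T : Fin (k + 1) → S, trajP μ P π k (extT k T) = ∑ s, μ s := by
  induction k with
  | zero =>
    refine Fintype.sum_equiv (Equiv.funUnique (Fin 1) S) _ _ fun T => ?_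
    simp [trajP, extT]
  | succ k ih =>
    rw [sum_fin_snoc, ← ih]
    refine sum_congr rfl fun T _ => ?_
    simp_rw [trajP_snoc]
    rw [← mul_sum, hP, mul_one]

variable [DecidableEq S] [DecidableEq A]

lemma nVisits_succ (π : ℕ → S → A) (k : ℕ) (z : S × A) (f : ℕ → S) :
    nVisits π (k + 1) z f = nVisits π k z f + if (f k, π k (f k)) = z then 1 else 0 :=
  sum_range_succ _ _

lemma nVisits_le (π : ℕ → S → A) (k : ℕ) (z : S × A) (f : ℕ → S) : nVisits π k z f ≤ k := by
  refine (sum_le_card_nsmul _ _ 1 fun h _ => ?_).trans (by simp)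
  split_ifs <;> simp

lemma nVisits_snoc (π : ℕ → S → A) {j k : ℕ} (hj : j ≤ k + 1) (z : S × A)
    (T : Fin (k + 1) → S) (s : S) :
    nVisits π j z (extT (k + 1) (Fin.snoc (α := fun _ => S) T s)) = nVisits π j z (extT k T) := by
  refine sum_congr rfl fun h hh => ?_
  have := mem_range.1 hh
  rw [extT_snoc_of_le T s (by omega)]

lemma sum_range_eq_sum_nVisits [Fintype S] [Fintype A] (π : ℕ → S → A) (k : ℕ) (f : ℕ → S)
    (c : S → A → ℝ) :
    ∑ j ∈ range k, c (f j) (π j (f j)) = ∑ s, ∑ a, (nVisits π k (s, a) f : ℝ) * c s a := by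
  induction k with
  | zero => simp [nVisits]
  | succ k ih =>
    rw [sum_range_succ, ih]
    simp_rw [nVisits_succ, Nat.cast_add, add_mul, sum_add_distrib]
    congr 1
    rw [← Fintype.sum_prod_type' (f := fun s a =>
      (((if (f k, π k (f k)) = (s, a) then 1 else 0 : ℕ) : ℝ)) * c s a)]
    simp

/-- The trajectory `f` visits each pair `(s, a)` at most `m s a` times in its first `k` steps. -/
def WithinBudget (π : ℕ → S → A) (m : S → A → ℝ) (k : ℕ) (f : ℕ → S) : Prop :=
  ∀ s a, (nVisits π k (s, a) f : ℝ) ≤ m s a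

lemma WithinBudget.of_succ {π : ℕ → S → A} {m : S → A → ℝ} {k : ℕ} {f : ℕ → S}
    (h : WithinBudget π m (k + 1) f) : WithinBudget π m k f := fun s a =>
  le_trans (by rw [nVisits_succ]; push_cast; split_ifs <;> simp) (h s a)

lemma withinBudget_snoc (π : ℕ → S → A) (m : S → A → ℝ) {j k : ℕ} (hj : j ≤ k + 1)
    (T : Fin (k + 1) → S) (s : S) :
    WithinBudget π m j (extT (k + 1) (Fin.snoc (α := fun _ => S) T s)) ↔
      WithinBudget π m j (extT k T) := by
  simp only [WithinBudget, nVisits_snoc π hj]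

open Classical in
/-- The cost `c` accumulated in the first `k` steps, stopped before the budget `m` is exceeded. -/
noncomputable def stoppedCost (π : ℕ → S → A) (m c : S → A → ℝ) (k : ℕ) (f : ℕ → S) : ℝ :=
  ∑ j ∈ range k, if WithinBudget π m (j + 1) f then c (f j) (π j (f j)) else 0

open Classical in
lemma stoppedCost_snoc (π : ℕ → S → A) (m c : S → A → ℝ) (k : ℕ) (T : Fin (k + 1) → S) (s : S) :
    stoppedCost π m c (k + 1) (extT (k + 1) (Fin.snoc (α := fun _ => S) T s)) =
      stoppedCost π m c k (extT k T) + if WithinBudget π m (k + 1) (extT k T) then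
        c (extT k T k) (π k (extT k T k)) else 0 := by
  unfold stoppedCost
  rw [← sum_range_succ]
  refine sum_congr rfl fun j hj => ?_
  have := mem_range.1 hj
  rw [extT_snoc_of_le T s (by omega)]
  simp only [withinBudget_snoc π m (show j + 1 ≤ k + 1 by omega)]

lemma stoppedCost_le [Fintype S] [Fintype A] (π : ℕ → S → A) (m c : S → A → ℝ) {b : ℝ}
    (hb : 0 ≤ b) (hc : ∀ s a, 0 ≤ c s a) (hm : ∀ s a, 1 ≤ m s a → m s a * c s a ≤ b)
    (k : ℕ) (f : ℕ → S) :
    stoppedCost π m c k f ≤ Fintype.card S * (Fintype.card A * b) := by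
  classical
  induction k with
  | zero => simp only [stoppedCost, range_zero, sum_empty]; positivity
  | succ k ih =>
    by_cases hw : WithinBudget π m (k + 1) f
    · have h1 : stoppedCost π m c (k + 1) f ≤ ∑ j ∈ range (k + 1), c (f j) (π j (f j)) := by
        refine sum_le_sum fun j _ => ?_
        split_ifs
        exacts [le_rfl, hc _ _]
      refine h1.trans ?_
      rw [sum_range_eq_sum_nVisits]
      have h2 : ∀ s a, (nVisits π (k + 1) (s, a) f : ℝ) * c s a ≤ b := by
        intro s a
        rcases Nat.eq_zero_or_pos (nVisits π (k + 1) (s, a) f) with h | h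
        · simpa [h] using hb
        · have h' : (1 : ℝ) ≤ nVisits π (k + 1) (s, a) f := by exact_mod_cast h
          exact (mul_le_mul_of_nonneg_right (hw s a) (hc s a)).trans (hm s a (h'.trans (hw s a)))
      refine (sum_le_sum fun s _ => sum_le_sum fun a _ => h2 s a).trans (by simp)
    · have : stoppedCost π m c (k + 1) f = stoppedCost π m c k f := by
        simp [stoppedCost, sum_range_succ, hw]
      rw [this]; exact ih

end Trajectories

/-- The squared Hellinger distance (up to normalization) between two finite distributions. -/
noncomputable def hellingerSq {S : Type} [Fintype S] (p q : S → ℝ) : ℝ :=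
  ∑ s, (√(p s) - √(q s)) ^ 2

lemma hellingerSq_nonneg {S : Type} [Fintype S] (p q : S → ℝ) : 0 ≤ hellingerSq p q :=
  sum_nonneg fun _ _ => sq_nonneg _

lemma sum_sq_sqrt_mul_sub_le {S : Type} [Fintype S] {p q : S → ℝ} (hp : ∀ s, 0 ≤ p s)
    (hq : ∀ s, 0 ≤ q s) (hp1 : ∑ s, p s = 1) (hq1 : ∑ s, q s = 1) {x y : ℝ} (hx : 0 ≤ x)
    (hy : 0 ≤ y) :
    ∑ s, (√(x * p s) - √(y * q s)) ^ 2 ≤ (√x - √y) ^ 2 + (x + y) / 2 * hellingerSq p q := by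
  have key : ∀ s, (√(x * p s) - √(y * q s)) ^ 2 =
      (x - √x * √y) * p s + (y - √x * √y) * q s + √x * √y * (√(p s) - √(q s)) ^ 2 := by
    intro s
    rw [Real.sqrt_mul hx, Real.sqrt_mul hy]
    linear_combination (√(p s)) ^ 2 * Real.sq_sqrt hx + (√(q s)) ^ 2 * Real.sq_sqrt hy +
      (x - √x * √y) * Real.sq_sqrt (hp s) + (y - √x * √y) * Real.sq_sqrt (hq s)
  simp_rw [key, sum_add_distrib, ← mul_sum, hp1, hq1]
  have h1 : √x * √y ≤ (x + y) / 2 := by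
    nlinarith [sq_nonneg (√x - √y), Real.sq_sqrt hx, Real.sq_sqrt hy]
  have h2 := mul_le_mul_of_nonneg_right h1 (hellingerSq_nonneg p q)
  unfold hellingerSq at *
  nlinarith [Real.sq_sqrt hx, Real.sq_sqrt hy]

open Classical in
/-- The squared Hellinger distance between the laws of the trajectories of two MDPs with the same
initial weights, restricted to trajectories within budget, is at most the expected stopped sum of
the squared Hellinger distances of the transitions. -/
lemma sum_withinBudget_sq_sqrt_sub_le {S A : Type} [Fintype S] [DecidableEq S] [DecidableEq A]
    {ν : S → ℝ} {P Q : S → A → S → ℝ} (hν : ∀ s, 0 ≤ ν s)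
    (hP0 : ∀ s a s', 0 ≤ P s a s') (hP1 : ∀ s a, ∑ s', P s a s' = 1)
    (hQ0 : ∀ s a s', 0 ≤ Q s a s') (hQ1 : ∀ s a, ∑ s', Q s a s' = 1)
    (π : ℕ → S → A) (m : S → A → ℝ) (k : ℕ) :
    ∑ T : Fin (k + 1) → S, (if WithinBudget π m k (extT k T) then
        (√(trajP ν P π k (extT k T)) - √(trajP ν Q π k (extT k T))) ^ 2 else 0) ≤
      ∑ T : Fin (k + 1) → S, (trajP ν P π k (extT k T) + trajP ν Q π k (extT k T)) / 2 *
        stoppedCost π m (fun s a => hellingerSq (P s a) (Q s a)) k (extT k T) := by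
  induction k with
  | zero => simp [trajP, stoppedCost]
  | succ k ih =>
    rw [sum_fin_snoc, sum_fin_snoc]
    simp_rw [trajP_snoc, stoppedCost_snoc, withinBudget_snoc π m le_rfl]
    have hstep : ∀ T : Fin (k + 1) → S, _ := fun T =>
      sum_sq_sqrt_mul_sub_le (hP0 (extT k T k) (π k (extT k T k)))
        (hQ0 (extT k T k) (π k (extT k T k))) (hP1 _ _) (hQ1 _ _)
        (trajP_nonneg hν hP0 π k (extT k T)) (trajP_nonneg hν hQ0 π k (extT k T))
    have hsum : ∀ (T : Fin (k + 1) → S) (x y r : ℝ),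
        ∑ s, (x * P (extT k T k) (π k (extT k T k)) s +
          y * Q (extT k T k) (π k (extT k T k)) s) / 2 * r = (x + y) / 2 * r := by
      intro T x y r
      rw [← sum_mul, ← sum_div, sum_add_distrib, ← mul_sum, ← mul_sum, hP1, hQ1, mul_one, mul_one]
    simp_rw [hsum, mul_add, sum_add_distrib]
    refine le_trans ?_ (add_le_add_left ih _)
    rw [← sum_add_distrib]
    refine sum_le_sum fun T _ => ?_
    by_cases hw : WithinBudget π m (k + 1) (extT k T)
    · simpa only [hw, hw.of_succ, if_true] using hstep T
    · simp only [hw, if_false, sum_const_zero, mul_zero, add_zero]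
      split_ifs
      exacts [sq_nonneg _, le_rfl]

lemma sq_sqrt_sub_sqrt_le {p q c η : ℝ} (hp : 0 ≤ p) (hq : 0 ≤ q) (hc : 0 < c) (hη0 : 0 ≤ η)
    (hη1 : η ≤ 1) (h : |q - p| ≤ η * max √(p * c) c) : (√p - √q) ^ 2 ≤ η * c := by
  have hsp := Real.sqrt_nonneg p
  have hsq := Real.sqrt_nonneg q
  have hdiff : |q - p| = |√p - √q| * (√p + √q) := by
    rw [← abs_of_nonneg (add_nonneg hsp hsq), ← abs_mul, abs_sub_comm]
    congr 1
    linear_combination -Real.sq_sqrt hp + Real.sq_sqrt hq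
  rcases lt_or_ge p c with hpc | hpc
  · have hmax : max √(p * c) c = c :=
      max_eq_right (Real.sqrt_le_left hc.le |>.2 (by nlinarith))
    rw [hmax] at h
    refine le_trans ?_ h
    rw [hdiff, ← sq_abs, sq]
    refine mul_le_mul_of_nonneg_left (abs_le.2 ⟨by linarith, by linarith⟩) (abs_nonneg _)
  · have hmax : max √(p * c) c = √p * √c := by
      rw [Real.sqrt_mul hp, max_eq_left]
      calc c = √c * √c := (Real.mul_self_sqrt hc.le).symm
        _ ≤ _ := mul_le_mul_of_nonneg_right (Real.sqrt_le_sqrt hpc) (Real.sqrt_nonneg _)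
    rw [hmax, hdiff] at h
    have hsp' : 0 < √p := Real.sqrt_pos.2 (hc.trans_le hpc)
    have h1 : |√p - √q| ≤ η * √c := by
      refine le_of_mul_le_mul_right ?_ hsp'
      nlinarith [mul_nonneg (abs_nonneg (√p - √q)) hsq]
    calc (√p - √q) ^ 2 = |√p - √q| ^ 2 := (sq_abs _).symm
      _ ≤ (η * √c) ^ 2 := by gcongr
      _ = η * η * c := by rw [mul_pow, Real.sq_sqrt hc.le]; ring
      _ ≤ η * c := by nlinarith [mul_le_mul_of_nonneg_left hη1 (mul_nonneg hη0 hc.le)]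

open Classical in
/-- The mass of the trajectories exceeding the quantile of an `ℕ`-valued statistic. -/
lemma sum_quantNS_lt_le {S A : Type} [Fintype S] {μ : S → ℝ} {P : S → A → S → ℝ}
    (π : ℕ → S → A) (H : ℕ) {X : (ℕ → S) → ℕ} {B : ℕ} (hX : ∀ f, X f ≤ B) {d : ℝ} (hd : 0 < d) :
    ∑ T : Fin (H + 1) → S, (if quantNS μ P π H (fun f => (X f : ℝ)) d < X (extT H T) then
      trajP μ P π H (extT H T) else 0) ≤ d := by
  by_contra! hlt
  set q := quantNS μ P π H (fun f => (X f : ℝ)) d with hq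
  have hiff : ∀ n : ℕ, ((⌊q⌋ + 1 : ℤ) : ℝ) ≤ n ↔ q < n := by
    intro n
    rw [← Int.cast_natCast (R := ℝ) n, Int.cast_le, Int.add_one_le_iff, Int.floor_lt]
  have hle : ((⌊q⌋ + 1 : ℤ) : ℝ) ≤ q := by
    refine le_csSup ⟨(B : ℝ), fun x hx => ?_⟩ ?_
    · by_contra! hBx
      have : ∀ f, ¬ x ≤ (X f : ℝ) := fun f hf =>
        absurd (hf.trans (Nat.cast_le.2 (hX f))) (not_le.2 hBx)
      simp only [Set.mem_ofPred_eq, this, if_false, sum_const_zero] at hx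
      linarith
    · simp only [Set.mem_ofPred_eq, hiff]
      convert hlt.le
  have := Int.lt_floor_add_one q
  push_cast at hle
  linarith

lemma abs_sub_le_sq_sqrt {p q : ℝ} (hp : 0 ≤ p) (hq : 0 ≤ q) {ε : ℝ} (hε : 0 < ε) :
    |p - q| ≤ 10 / ε * (√p - √q) ^ 2 + ε / 20 * (p + q) := by
  obtain ⟨x, hx, rfl⟩ : ∃ x, 0 ≤ x ∧ p = x ^ 2 := ⟨√p, Real.sqrt_nonneg _, (Real.sq_sqrt hp).symm⟩
  obtain ⟨y, hy, rfl⟩ : ∃ y, 0 ≤ y ∧ q = y ^ 2 := ⟨√q, Real.sqrt_nonneg _, (Real.sq_sqrt hq).symm⟩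
  rw [Real.sqrt_sq hx, Real.sqrt_sq hy]
  have hd : |x - y| ^ 2 = (x - y) ^ 2 := sq_abs _
  have h1 : 10 / ε * (x - y) ^ 2 + ε / 20 * (x ^ 2 + y ^ 2) - |x - y| * (x + y) =
      10 / ε * (|x - y| - ε / 20 * (x + y)) ^ 2 + ε / 40 * (x - y) ^ 2 := by
    have h0 : 10 / ε * ε = 10 := by field_simp
    linear_combination -(10 / ε) * hd +
      (|x - y| / 10 * (x + y) - ε / 400 * (x + y) ^ 2) * h0
  have h2 : |x ^ 2 - y ^ 2| = |x - y| * (x + y) := by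
    rw [sq_sub_sq, abs_mul, abs_of_nonneg (add_nonneg hx hy), mul_comm]
  have h3 : 0 ≤ 10 / ε * (|x - y| - ε / 20 * (x + y)) ^ 2 + ε / 40 * (x - y) ^ 2 := by positivity
  linarith

lemma sum_integral_le_one_of_pi {n : ℕ} (R : Fin n → Measure ℝ) [∀ i, IsProbabilityMeasure (R i)]
    (h : ∀ᵐ x ∂Measure.pi R, (∀ i, x i ∈ Set.Icc (0 : ℝ) 1) ∧ ∑ i, x i ≤ 1) :
    ∑ i, ∫ x, x ∂(R i) ≤ 1 := by
  have hint : ∀ i, Integrable (fun x : Fin n → ℝ => x i) (Measure.pi R) := fun i => by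
    refine Integrable.of_bound (measurable_pi_apply i).aestronglyMeasurable 1 ?_
    filter_upwards [h] with x hx
    rw [Real.norm_eq_abs, abs_of_nonneg (hx.1 i).1]
    exact (hx.1 i).2
  have hcomp : ∀ i, ∫ x, x ∂(R i) = ∫ x : Fin n → ℝ, x i ∂(Measure.pi R) := fun i =>
    ((integral_comp_eval (μ := R) (i := i) (f := fun x : ℝ => x)
      measurable_id.aestronglyMeasurable)).symm
  simp_rw [hcomp]
  rw [← integral_finsetSum _ fun i _ => hint i]
  refine (integral_mono_ae (integrable_finsetSum _ fun i _ => hint i) (integrable_const 1)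
    (h.mono fun x hx => hx.2)).trans (by simp)

lemma integral_sq_le_integral {R : Measure ℝ} [IsProbabilityMeasure R]
    (h : ∀ᵐ x ∂(R), x ∈ Set.Icc (0 : ℝ) 1) : ∫ x, x ^ 2 ∂(R) ≤ ∫ x, x ∂(R) := by
  have hint : Integrable (fun x : ℝ => x) R := by
    refine Integrable.of_bound measurable_id.aestronglyMeasurable 1 ?_
    filter_upwards [h] with x hx
    rw [Real.norm_eq_abs, abs_of_nonneg hx.1]
    exact hx.2
  refine integral_mono_of_nonneg (Filter.Eventually.of_forall fun x => sq_nonneg x) hint ?_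
  filter_upwards [h] with x hx
  nlinarith [hx.1, hx.2]

lemma max_sqrt_div_le {q m n : ℝ} (hn : 0 < n) (hnm : n ≤ m) (hq : n * q ≤ 1) (hq0 : 0 ≤ q) :
    max √(q / m) (1 / m) ≤ 1 / n := by
  refine max_le (Real.sqrt_le_left (by positivity) |>.2 ?_) (one_div_le_one_div_of_le hn hnm)
  calc q / m ≤ q / n := div_le_div_of_nonneg_left hq0 hn hnm
    _ = (n * q) * (1 / n) ^ 2 := by field_simp
    _ ≤ 1 * (1 / n) ^ 2 := by gcongr
    _ = _ := one_mul _

lemma sum_reward_sub_le {S A : Type} [Fintype S] [DecidableEq S] [Fintype A] [DecidableEq A]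
    {π : ℕ → S → A} {m r q rhat : S → A → ℝ} {κ : ℝ} (hκ : 0 ≤ κ) {H : ℕ} {f : ℕ → S}
    (hf : WithinBudget π m H f) (hr0 : ∀ s a, 0 ≤ r s a) (hq0 : ∀ s a, 0 ≤ q s a)
    (hqr : ∀ s a, q s a ≤ r s a) (hr1 : ∑ h ∈ range H, r (f h) (π h (f h)) ≤ 1)
    (hclose : ∀ s a, 1 ≤ m s a →
      |rhat s a - r s a| ≤ κ * max √(q s a / m s a) (1 / m s a)) :
    ∑ h ∈ range H, r (f h) (π h (f h)) - Fintype.card S * (Fintype.card A * κ) ≤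
      ∑ h ∈ range H, rhat (f h) (π h (f h)) := by
  rw [sum_range_eq_sum_nVisits] at hr1
  have hone : ∀ s a, (nVisits π H (s, a) f : ℝ) * r s a ≤ 1 := fun s a => by
    refine le_trans ?_ hr1
    have h0 : ∀ s a, 0 ≤ (nVisits π H (s, a) f : ℝ) * r s a := fun s a =>
      mul_nonneg (Nat.cast_nonneg _) (hr0 s a)
    refine (single_le_sum (f := fun a => (nVisits π H (s, a) f : ℝ) * r s a)
      (fun a _ => h0 s a) (mem_univ a)).trans ?_
    exact single_le_sum (f := fun s => ∑ a, (nVisits π H (s, a) f : ℝ) * r s a)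
      (fun s _ => sum_nonneg fun a _ => h0 s a) (mem_univ s)
  have hdiff : ∀ s a, (nVisits π H (s, a) f : ℝ) * (r s a - rhat s a) ≤ κ := by
    intro s a
    rcases Nat.eq_zero_or_pos (nVisits π H (s, a) f) with h | h
    · simpa [h] using hκ
    · have hn : (1 : ℝ) ≤ nVisits π H (s, a) f := by exact_mod_cast h
      set n : ℝ := ((nVisits π H (s, a) f : ℕ) : ℝ)
      have hn0 : 0 < n := by linarith
      have hmax := max_sqrt_div_le hn0 (hf s a)
        ((mul_le_mul_of_nonneg_left (hqr s a) hn0.le).trans (hone s a)) (hq0 s a)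
      have habs := (hclose s a (hn.trans (hf s a))).trans (mul_le_mul_of_nonneg_left hmax hκ)
      calc n * (r s a - rhat s a) ≤ n * (κ * (1 / n)) := by
            refine mul_le_mul_of_nonneg_left ?_ hn0.le
            linarith [(abs_le.1 habs).1]
        _ = κ := by field_simp
  have hsum : ∑ h ∈ range H, (r (f h) (π h (f h)) - rhat (f h) (π h (f h))) ≤
      Fintype.card S * (Fintype.card A * κ) := by
    rw [sum_range_eq_sum_nVisits π H f fun s a => r s a - rhat s a]
    exact (sum_le_sum fun s _ => sum_le_sum fun a _ => hdiff s a).trans (by simp)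
  rw [sum_sub_distrib] at hsum
  linarith

open Classical in
lemma sum_not_withinBudget_le {S A : Type} [Fintype S] [DecidableEq S] [Fintype A]
    [DecidableEq A] {μ : S → ℝ} {P : S → A → S → ℝ} (hμ : ∀ s, 0 ≤ μ s)
    (hP : ∀ s a s', 0 ≤ P s a s') (π : ℕ → S → A) (H : ℕ) {m : S → A → ℝ} {d : ℝ} (hd : 0 < d)
    (hm : ∀ s a, m s a = quantNS μ P π H (fun f => (nVisits π H (s, a) f : ℝ)) d) :
    ∑ T : Fin (H + 1) → S, (if WithinBudget π m H (extT H T) then 0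
      else trajP μ P π H (extT H T)) ≤ Fintype.card S * (Fintype.card A * d) := by
  calc _ ≤ ∑ T : Fin (H + 1) → S, ∑ s, ∑ a, (if m s a < nVisits π H (s, a) (extT H T) then
        trajP μ P π H (extT H T) else 0) := by
        refine sum_le_sum fun T _ => ?_
        have hp := trajP_nonneg hμ hP π H (extT H T)
        have h0 : ∀ s a, 0 ≤ (if m s a < nVisits π H (s, a) (extT H T) then
            trajP μ P π H (extT H T) else 0) := fun s a => by split_ifs <;> simp [hp]
        split_ifs with hw
        · exact sum_nonneg fun s _ => sum_nonneg fun a _ => h0 s a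
        · obtain ⟨s, a, hsa⟩ : ∃ s a, m s a < nVisits π H (s, a) (extT H T) := by
            simpa [WithinBudget] using hw
          refine le_trans ?_ (single_le_sum (fun s _ => sum_nonneg fun a _ => h0 s a) (mem_univ s))
          refine le_trans ?_ (single_le_sum (fun a _ => h0 s a) (mem_univ a))
          simp [hsa]
    _ = ∑ s, ∑ a, ∑ T : Fin (H + 1) → S, (if m s a < nVisits π H (s, a) (extT H T) then
        trajP μ P π H (extT H T) else 0) := by
        rw [sum_comm]
        exact sum_congr rfl fun s _ => sum_comm
    _ ≤ ∑ s : S, ∑ a : A, d := by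
        refine sum_le_sum fun s _ => sum_le_sum fun a _ => ?_
        rw [hm]
        exact sum_quantNS_lt_le π H (fun f => nVisits_le π H (s, a) f) hd
    _ = _ := by simp

theorem stmt13 {S A : Type} [Fintype S] [DecidableEq S] [Fintype A] [DecidableEq A]
    (μ μhat : S → ℝ) (P Phat : S → A → S → ℝ)
    (R : S → A → Measure ℝ) [∀ s a, IsProbabilityMeasure (R s a)]
    (Rhat : S → A → ℝ)
    (H : ℕ) (hHpos : 0 < H)
    (π : ℕ → S → A)
    (ε : ℝ) (hε0 : 0 < ε) (hε1 : ε ≤ 1 / 2)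
    -- M = (S, A, P, R, H, μ) is an MDP
    (hμ0 : ∀ s, 0 ≤ μ s) (hμ1 : ∑ s, μ s = 1)
    (hP0 : ∀ s a s', 0 ≤ P s a s') (hP1 : ∀ s a, ∑ s', P s a s' = 1)
    (hR01 : ∀ s a, ∀ᵐ x ∂(R s a), x ∈ Set.Icc (0 : ℝ) 1)
    -- M̂ = (S, A, P̂, R̂, H, μ̂) is an MDP
    (hμh0 : ∀ s, 0 ≤ μhat s) (hμh1 : ∑ s, μhat s = 1)
    (hPh0 : ∀ s a s', 0 ≤ Phat s a s') (hPh1 : ∀ s a, ∑ s', Phat s a s' = 1)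
    (hRh01 : ∀ s a, Rhat s a ∈ Set.Icc (0 : ℝ) 1)
    -- M satisfies the bounded total reward assumption
    (hBTR : ∀ (π' : ℕ → S → A) (T : Fin (H + 1) → S), 0 < trajP μ P π' H (extT H T) →
      ∀ᵐ rew ∂(Measure.pi fun h : Fin H =>
          R (extT H T (h : ℕ)) (π' (h : ℕ) (extT H T (h : ℕ)))),
        (∀ h : Fin H, rew h ∈ Set.Icc (0 : ℝ) 1) ∧ (∑ h : Fin H, rew h) ≤ 1)
    -- m̄(s, a) is the (ε / (12|S||A|))-quantile of the visitation frequency of (s, a) under π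
    (mbar : S → A → ℝ)
    (hmbar : ∀ s a, mbar s a =
      quantNS μ P π H (fun f => (nVisits π H (s, a) f : ℝ))
        (ε / (12 * (Fintype.card S : ℝ) * (Fintype.card A : ℝ))))
    -- closeness of the transition probabilities
    (hPclose : ∀ s a s', 1 ≤ mbar s a →
      |Phat s a s' - P s a s'| ≤
        ε / (96 * (Fintype.card S : ℝ) ^ 2 * (Fintype.card A : ℝ)) *
          max (Real.sqrt (ε * P s a s' /
                (72 * mbar s a * ((Fintype.card S : ℝ) * (Fintype.card A : ℝ)))))
              (ε / (72 * mbar s a * ((Fintype.card S : ℝ) * (Fintype.card A : ℝ)))))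
    -- closeness of the mean rewards
    (hRclose : ∀ s a, 1 ≤ mbar s a →
      |Rhat s a - ∫ x, x ∂(R s a)| ≤
        ε / (24 * (Fintype.card S : ℝ) * (Fintype.card A : ℝ)) *
          max (Real.sqrt ((∫ x, x ^ 2 ∂(R s a)) / mbar s a)) (1 / mbar s a))
    -- closeness of the initial state distributions
    (hμclose : ∀ s, |μ s - μhat s| ≤ ε / (6 * (Fintype.card S : ℝ))) :
    valNS μ P (fun s a => ∫ x, x ∂(R s a)) π H - ε ≤ valNS μhat Phat Rhat π H := by
  classical
  have hSne : Nonempty S := by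
    by_contra h
    rw [not_nonempty_iff] at h
    simp at hμ1
  have hAne : Nonempty A := ⟨π 0 hSne.some⟩
  have hS : (1 : ℝ) ≤ Fintype.card S := by exact_mod_cast Fintype.card_pos
  have hA : (1 : ℝ) ≤ Fintype.card A := by exact_mod_cast Fintype.card_pos
  set cS : ℝ := (Fintype.card S : ℝ) with hcS
  set cA : ℝ := (Fintype.card A : ℝ) with hcA
  have hS0 : 0 < cS := by linarith
  have hA0 : 0 < cA := by linarith
  have hη1 : ε / (96 * cS ^ 2 * cA) ≤ 1 := by
    rw [div_le_one (by positivity)]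
    nlinarith [mul_le_mul (one_le_pow₀ hS : 1 ≤ cS ^ 2) hA zero_le_one (by positivity)]
  have hhell : ∀ s a, 1 ≤ mbar s a → mbar s a * hellingerSq (P s a) (Phat s a) ≤
      ε ^ 2 / (6912 * cS ^ 2 * cA ^ 2) := by
    intro s a hm
    have hm0 : 0 < mbar s a := by linarith
    set c := ε / (72 * mbar s a * (cS * cA)) with hc
    have hc0 : 0 < c := by positivity
    have hle : hellingerSq (P s a) (Phat s a) ≤ cS * (ε / (96 * cS ^ 2 * cA) * c) := by
      refine (sum_le_sum fun s' _ => sq_sqrt_sub_sqrt_le (hP0 s a s') (hPh0 s a s') hc0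
        (by positivity) hη1 ?_).trans (by simp [hcS])
      have := hPclose s a s' hm
      rwa [show ε * P s a s' / (72 * mbar s a * (cS * cA)) = P s a s' * c by rw [hc]; ring] at this
    calc mbar s a * hellingerSq (P s a) (Phat s a)
        ≤ mbar s a * (cS * (ε / (96 * cS ^ 2 * cA) * c)) := by gcongr
      _ = _ := by rw [hc]; field_simp; norm_num
  have hr0 : ∀ s a, 0 ≤ ∫ x, x ∂(R s a) := fun s a =>
    integral_nonneg_of_ae ((hR01 s a).mono fun x hx => hx.1)
  have hr1 : ∀ T : Fin (H + 1) → S, 0 < trajP μ P π H (extT H T) →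
      ∑ h ∈ range H, ∫ x, x ∂(R (extT H T h) (π h (extT H T h))) ≤ 1 := by
    intro T hT
    rw [sum_range (fun h => ∫ x, x ∂(R (extT H T h) (π h (extT H T h))))]
    exact sum_integral_le_one_of_pi _ (hBTR π T hT)
  let ν : S → ℝ := fun s => min (μ s) (μhat s)
  have hν0 : ∀ s, 0 ≤ ν s := fun s => le_min (hμ0 s) (hμh0 s)
  have hν1 : ∑ s, ν s ≤ 1 := (sum_le_sum fun s _ => min_le_left _ _).trans hμ1.le
  have hν2 : 1 - ε / 6 ≤ ∑ s, ν s := by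
    have h : ∀ s, μ s - ε / (6 * cS) ≤ ν s := fun s => by
      have := abs_le.1 (hμclose s)
      have : 0 < ε / (6 * cS) := by positivity
      exact le_min (by linarith) (by linarith)
    have h' := sum_le_sum fun s (_ : s ∈ univ) => h s
    rw [sum_sub_distrib, hμ1, sum_const, card_univ, nsmul_eq_mul] at h'
    rwa [show (Fintype.card S : ℝ) * (ε / (6 * cS)) = ε / 6 by rw [← hcS]; field_simp] at h'
  have hmono : ∀ (Q : S → A → S → ℝ) (μ' : S → ℝ), (∀ s a s', 0 ≤ Q s a s') →
      (∀ s, ν s ≤ μ' s) → ∀ f, trajP ν Q π H f ≤ trajP μ' Q π H f := fun Q μ' hQ h f =>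
    mul_le_mul_of_nonneg_right (h _) (prod_nonneg fun _ _ => hQ _ _ _)
  have hpoint : ∀ T : Fin (H + 1) → S,
      trajP μ P π H (extT H T) * ∑ h ∈ range H, ∫ x, x ∂(R (extT H T h) (π h (extT H T h))) -
        trajP μhat Phat π H (extT H T) * ∑ h ∈ range H, Rhat (extT H T h) (π h (extT H T h)) ≤
      (trajP μ P π H (extT H T) - trajP ν P π H (extT H T)) +
      (if WithinBudget π mbar H (extT H T) then 0 else trajP μ P π H (extT H T)) +
      ε / 24 * trajP ν Phat π H (extT H T) +
      10 / ε * (if WithinBudget π mbar H (extT H T) then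
        (√(trajP ν P π H (extT H T)) - √(trajP ν Phat π H (extT H T))) ^ 2 else 0) +
      ε / 20 * (trajP ν P π H (extT H T) + trajP ν Phat π H (extT H T)) := by
    intro T
    have hp0 := trajP_nonneg hμ0 hP0 π H (extT H T)
    have hpν0 := trajP_nonneg hν0 hP0 π H (extT H T)
    have hqν0 := trajP_nonneg hν0 hPh0 π H (extT H T)
    have hpν := hmono P μ hP0 (fun s => min_le_left _ _) (extT H T)
    have hqν := hmono Phat μhat hPh0 (fun s => min_le_right _ _) (extT H T)
    have hG0 : 0 ≤ ∑ h ∈ range H, ∫ x, x ∂(R (extT H T h) (π h (extT H T h))) :=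
      sum_nonneg fun _ _ => hr0 _ _
    have hGh0 : 0 ≤ ∑ h ∈ range H, Rhat (extT H T h) (π h (extT H T h)) :=
      sum_nonneg fun _ _ => (hRh01 _ _).1
    have hG1 := hr1 T
    have hG : WithinBudget π mbar H (extT H T) → 0 < trajP μ P π H (extT H T) →
        ∑ h ∈ range H, ∫ x, x ∂(R (extT H T h) (π h (extT H T h))) - ε / 24 ≤
          ∑ h ∈ range H, Rhat (extT H T h) (π h (extT H T h)) := by
      intro hw hp
      have h := sum_reward_sub_le (r := fun s a => ∫ x, x ∂(R s a))
        (q := fun s a => ∫ x, x ^ 2 ∂(R s a)) (κ := ε / (24 * cS * cA)) (by positivity) hw hr0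
        (fun s a => integral_nonneg fun x => sq_nonneg x)
        (fun s a => integral_sq_le_integral (hR01 s a)) (hG1 hp) hRclose
      rwa [show (Fintype.card S : ℝ) * (Fintype.card A * (ε / (24 * cS * cA))) = ε / 24 by
        rw [← hcS, ← hcA]; field_simp] at h
    have habs := abs_sub_le_sq_sqrt hpν0 hqν0 hε0
    generalize ∑ h ∈ range H, ∫ x, x ∂(R (extT H T h) (π h (extT H T h))) = G at *
    generalize ∑ h ∈ range H, Rhat (extT H T h) (π h (extT H T h)) = Gh at *
    generalize trajP μ P π H (extT H T) = p at *
    generalize trajP μhat Phat π H (extT H T) = q at *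
    generalize trajP ν P π H (extT H T) = pν at *
    generalize trajP ν Phat π H (extT H T) = qν at *
    have hq0 : 0 ≤ q := hqν0.trans hqν
    have hqG : 0 ≤ q * Gh := mul_nonneg hq0 hGh0
    have h1 : 0 ≤ ε / 24 * qν := by positivity
    have h2 : 0 ≤ 10 / ε * (√pν - √qν) ^ 2 := by positivity
    have h3 : 0 ≤ ε / 20 * (pν + qν) := by positivity
    rcases hp0.eq_or_lt with hp | hp
    · subst hp
      split_ifs <;> linarith
    · have hG1 := hG1 hp
      split_ifs with hw
      · have h4 : qν * (G - ε / 24) ≤ q * Gh :=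
          (mul_le_mul_of_nonneg_left (hG hw hp) hqν0).trans (mul_le_mul_of_nonneg_right hqν hGh0)
        have h5 : (p - pν) * G ≤ p - pν := mul_le_of_le_one_right (by linarith) hG1
        have h6 : (pν - qν) * G ≤ |pν - qν| :=
          (mul_le_mul_of_nonneg_right (le_abs_self _) hG0).trans
            (mul_le_of_le_one_right (abs_nonneg _) hG1)
        linarith
      · have h4 : p * G ≤ p := mul_le_of_le_one_right hp.le hG1
        linarith
  have hbad := sum_not_withinBudget_le hμ0 hP0 π H
    (d := ε / (12 * cS * cA)) (by positivity) hmbar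
  rw [show (Fintype.card S : ℝ) * (Fintype.card A * (ε / (12 * cS * cA))) = ε / 12 by
    rw [← hcS, ← hcA]; field_simp] at hbad
  have hclose : ∑ T : Fin (H + 1) → S, (if WithinBudget π mbar H (extT H T) then
      (√(trajP ν P π H (extT H T)) - √(trajP ν Phat π H (extT H T))) ^ 2 else 0) ≤
      ε ^ 2 / 6912 := by
    refine (sum_withinBudget_sq_sqrt_sub_le hν0 hP0 hP1 hPh0 hPh1 π mbar H).trans ?_
    have hcost : ∀ f, stoppedCost π mbar (fun s a => hellingerSq (P s a) (Phat s a)) H f ≤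
        ε ^ 2 / 6912 := fun f => by
      refine (stoppedCost_le π mbar _ (b := ε ^ 2 / (6912 * cS ^ 2 * cA ^ 2)) (by positivity)
        (fun s a => hellingerSq_nonneg _ _) hhell H f).trans ?_
      rw [← hcS, ← hcA, show cS * (cA * (ε ^ 2 / (6912 * cS ^ 2 * cA ^ 2))) =
        ε ^ 2 / 6912 / (cS * cA) by field_simp]
      exact div_le_self (by positivity) (one_le_mul_of_one_le_of_one_le hS hA)
    refine (sum_le_sum fun T _ => mul_le_mul_of_nonneg_left (hcost _) (by
      linarith [trajP_nonneg hν0 hP0 π H (extT H T),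
        trajP_nonneg hν0 hPh0 π H (extT H T)])).trans ?_
    rw [← sum_mul, ← sum_div, sum_add_distrib, sum_trajP ν hP1, sum_trajP ν hPh1]
    exact mul_le_of_le_one_left (by positivity) (by linarith)
  have htotal := sum_le_sum fun T (_ : T ∈ univ) => hpoint T
  simp only [sum_sub_distrib, sum_add_distrib, ← mul_sum] at htotal
  rw [sum_trajP μ hP1, sum_trajP ν hP1, sum_trajP ν hPh1, hμ1] at htotal
  have hlast : 10 / ε * ∑ T : Fin (H + 1) → S, (if WithinBudget π mbar H (extT H T) then
      (√(trajP ν P π H (extT H T)) - √(trajP ν Phat π H (extT H T))) ^ 2 else 0) ≤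
      5 * ε / 3456 := by
    refine (mul_le_mul_of_nonneg_left hclose (by positivity)).trans (le_of_eq ?_)
    field_simp
    norm_num
  have hfinal := htotal.trans (add_le_add (add_le_add (add_le_add (add_le_add
    (sub_le_sub_left hν2 1) hbad) (mul_le_mul_of_nonneg_left hν1 (by positivity))) hlast)
    (mul_le_mul_of_nonneg_left (add_le_add hν1 hν1) (by positivity)))
  refine sub_le_comm.1 (hfinal.trans ?_)
  linarith
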